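/- arXiv:1011.5666 — 2 statements merged into one kernel-verified Lean document; each statement's English description precedes it below -/
import Mathlib

section
/- Let K and T be centrally symmetric convex bodies in ℝ^n. Then N(K,T) ≤ 3^n · vol(K) / vol(K ∩ T). -/
/-!
Put `L = K ∩ T`, a symmetric convex neighbourhood of `0`. Consider finite sets `Λ ⊆ K` in which
distinct points never differ by an element of `L`. Since `L/2 - L/2 ⊆ L`, the translates
`x + L/2`, `x ∈ Λ`, are disjoint, and they all lie in `K + K/2 ⊆ (3/2) K`; comparing volumes gives
`|Λ| vol(L) ≤ 3 ^ n vol(K)` (`card_mul_volume_le`). Hence a maximal such `Λ` exists, and maximality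
says exactly that `K ⊆ Λ + L ⊆ Λ + T` (`exists_separated_cover`).
-/

open MeasureTheory Pointwise
open scoped ENNReal

noncomputable section

abbrev Euc (n : ℕ) := EuclideanSpace ℝ (Fin n)

/-- A convex body: a compact convex set with nonempty interior. -/
def IsConvexBody {n : ℕ} (K : Set (Euc n)) : Prop :=
  Convex ℝ K ∧ IsCompact K ∧ (interior K).Nonempty

/-- The covering number `N(K,T)`: the least cardinality of a finite set `Λ`
with `K ⊆ Λ + T`.  It is `⊤` if no finite cover exists. -/
def coveringNumber {n : ℕ} (K T : Set (Euc n)) : ℕ∞ :=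
  sInf {m : ℕ∞ | ∃ Λ : Finset (Euc n), (Λ.card : ℕ∞) = m ∧ K ⊆ ↑Λ + T}

/-- A symmetric convex set with nonempty interior is a neighbourhood of the origin: `0` is the
midpoint of an interior point and its reflection. -/
theorem mem_nhds_zero_of_symmetric {n : ℕ} {K : Set (Euc n)} (hK : IsConvexBody K)
    (hs : K = -K) : K ∈ nhds (0 : Euc n) := by
  obtain ⟨hc, -, x, hx⟩ := hK
  rw [mem_interior_iff_mem_nhds] at hx
  have hx' : -x ∈ interior K := by
    rw [mem_interior_iff_mem_nhds]
    have h := (continuous_neg (G := Euc n)).continuousAt (x := -x)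
    have h2 : K ∈ nhds (-(-x)) := by rwa [neg_neg]
    have h3 : -K ∈ nhds (-x) := h h2
    rwa [← hs] at h3
  have h := hc.interior (mem_interior_iff_mem_nhds.2 hx) hx'
    (by norm_num : (0 : ℝ) ≤ 1 / 2) (by norm_num : (0 : ℝ) ≤ 1 / 2) (by norm_num)
  rw [smul_neg, add_neg_cancel] at h
  exact mem_interior_iff_mem_nhds.1 h

/-- A finite subset `Λ` of `K` is `L`-separated when distinct points of `Λ` never differ by an
element of `L`. -/
def IsSeparatedIn {n : ℕ} (K L : Set (Euc n)) (Λ : Finset (Euc n)) : Prop :=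
  ↑Λ ⊆ K ∧ ∀ x ∈ Λ, ∀ y ∈ Λ, x ≠ y → x - y ∉ L

/-- The packing bound: the translates of `L/2` centred at the points of an `L`-separated subset
of `K` are disjoint and contained in `(3/2) K`. -/
theorem card_mul_volume_le {n : ℕ} {K L : Set (Euc n)} (hK : Convex ℝ K) (hL : Convex ℝ L)
    (hLm : MeasurableSet L) (hLs : ∀ x ∈ L, -x ∈ L) (hLK : L ⊆ K) {Λ : Finset (Euc n)}
    (hΛ : IsSeparatedIn K L Λ) :
    (Λ.card : ℝ≥0∞) * volume L ≤ 3 ^ n * volume K := by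
  obtain ⟨hΛK, hsep⟩ := hΛ
  have hdisj : (Λ : Set (Euc n)).PairwiseDisjoint fun x => x +ᵥ ((1 / 2 : ℝ) • L) := by
    intro x hx y hy hxy
    refine Set.disjoint_left.2 ?_
    rintro _ ⟨_, ⟨a, ha, rfl⟩, rfl⟩ ⟨_, ⟨b, hb, rfl⟩, hab⟩
    refine hsep x hx y hy hxy ?_
    have hmem := hL hb (hLs a ha) (by norm_num : (0 : ℝ) ≤ 1 / 2)
      (by norm_num : (0 : ℝ) ≤ 1 / 2) (by norm_num)
    simp only [vadd_eq_add] at hab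
    have : x - y = (1 / 2 : ℝ) • b + (1 / 2 : ℝ) • (-a) := by
      rw [smul_neg, ← sub_eq_add_neg, sub_eq_sub_iff_add_eq_add, ← hab, add_comm]
    rwa [this]
  have hsub : (⋃ x ∈ Λ, x +ᵥ ((1 / 2 : ℝ) • L)) ⊆ (3 / 2 : ℝ) • K := by
    refine Set.iUnion₂_subset fun x hx => ?_
    rintro _ ⟨_, ⟨a, ha, rfl⟩, rfl⟩
    refine ⟨(2 / 3 : ℝ) • x + (1 / 3 : ℝ) • a, hK (hΛK hx) (hLK ha) (by norm_num) (by norm_num)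
      (by norm_num), ?_⟩
    simp only [vadd_eq_add, smul_add, smul_smul]
    norm_num
  have hvol := measure_mono (μ := volume) hsub
  rw [measure_biUnion_finset hdisj fun x _ => (hLm.const_smul₀ (1 / 2 : ℝ)).const_vadd x] at hvol
  simp only [measure_vadd, Measure.addHaar_smul, Finset.sum_const, nsmul_eq_mul,
    finrank_euclideanSpace, Fintype.card_fin] at hvol
  have h2 : (2 : ℝ≥0∞) ^ n * ENNReal.ofReal |(1 / 2 : ℝ) ^ n| = 1 := by
    rw [abs_of_nonneg (by positivity), ENNReal.ofReal_pow (by norm_num), ← mul_pow]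
    rw [show (2 : ℝ≥0∞) = ENNReal.ofReal 2 by simp, ← ENNReal.ofReal_mul (by norm_num)]
    norm_num
  have h3 : (2 : ℝ≥0∞) ^ n * ENNReal.ofReal |(3 / 2 : ℝ) ^ n| = 3 ^ n := by
    rw [abs_of_nonneg (by positivity), ENNReal.ofReal_pow (by norm_num), ← mul_pow]
    rw [show (2 : ℝ≥0∞) = ENNReal.ofReal 2 by simp, ← ENNReal.ofReal_mul (by norm_num)]
    norm_num
  calc (Λ.card : ℝ≥0∞) * volume L
      = (2 ^ n * ENNReal.ofReal |(1 / 2 : ℝ) ^ n|) * (Λ.card * volume L) := by rw [h2, one_mul]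
    _ = 2 ^ n * (Λ.card * (ENNReal.ofReal |(1 / 2 : ℝ) ^ n| * volume L)) := by ring
    _ ≤ 2 ^ n * (ENNReal.ofReal |(3 / 2 : ℝ) ^ n| * volume K) := by gcongr
    _ = 3 ^ n * volume K := by rw [← mul_assoc, h3]

/-- If the cardinalities of the `L`-separated subsets of `K` are bounded, one of these subsets
covers `K` by translates of `L`: a separated set that does not cover can be enlarged. -/
theorem exists_separated_cover {n : ℕ} {K L : Set (Euc n)} (h0 : (0 : Euc n) ∈ L)
    (hLs : ∀ x ∈ L, -x ∈ L) (N : ℕ) (hN : ∀ Λ, IsSeparatedIn K L Λ → Λ.card ≤ N) :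
    ∃ Λ, IsSeparatedIn K L Λ ∧ K ⊆ ↑Λ + L := by
  classical
  by_contra! hno
  have hall : ∀ m : ℕ, ∃ Λ, IsSeparatedIn K L Λ ∧ Λ.card = m := by
    intro m
    induction m with
    | zero => exact ⟨∅, ⟨by simp, by simp⟩, rfl⟩
    | succ m ih =>
      obtain ⟨Λ, hΛ, rfl⟩ := ih
      obtain ⟨z, hzK, hz⟩ := Set.not_subset.1 (hno Λ hΛ)
      have hzL : ∀ x ∈ Λ, z - x ∉ L := fun x hx h =>
        hz ⟨x, hx, z - x, h, add_sub_cancel x z⟩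
      have hzΛ : z ∉ Λ := fun h => hzL z h (by rwa [sub_self])
      refine ⟨insert z Λ, ⟨?_, ?_⟩, Finset.card_insert_of_notMem hzΛ⟩
      · rw [Finset.coe_insert]
        exact Set.insert_subset hzK hΛ.1
      · intro x hx y hy hxy hL
        rcases Finset.mem_insert.1 hx with rfl | hx' <;>
          rcases Finset.mem_insert.1 hy with rfl | hy'
        · exact hxy rfl
        · exact hzL y hy' hL
        · exact hzL x hx' (by simpa using hLs _ hL)
        · exact hΛ.2 x hx' y hy' hxy hL
  obtain ⟨Λ, hΛ, hcard⟩ := hall (N + 1)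
  have := hN Λ hΛ
  omega

theorem covering_number_le_of_both_symmetric
    {n : ℕ} (K T : Set (Euc n)) (hK : IsConvexBody K) (hT : IsConvexBody T)
    (hKsym : K = -K) (hTsym : T = -T) :
    (coveringNumber K T : ℝ≥0∞) ≤ 3 ^ n * volume K / volume (K ∩ T) := by
  have hL0 : K ∩ T ∈ nhds (0 : Euc n) :=
    Filter.inter_mem (mem_nhds_zero_of_symmetric hK hKsym) (mem_nhds_zero_of_symmetric hT hTsym)
  have hpos : volume (K ∩ T) ≠ 0 := (Measure.measure_pos_of_mem_nhds volume hL0).ne'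
  have hLc : IsCompact (K ∩ T) := hK.2.1.inter hT.2.1
  have hfin : volume (K ∩ T) ≠ ∞ := hLc.measure_lt_top.ne
  have hLs : ∀ x ∈ K ∩ T, -x ∈ K ∩ T := fun x hx =>
    ⟨by rw [hKsym]; simpa using hx.1, by rw [hTsym]; simpa using hx.2⟩
  have hbound : ∀ Λ, IsSeparatedIn K (K ∩ T) Λ →
      (Λ.card : ℝ≥0∞) ≤ 3 ^ n * volume K / volume (K ∩ T) := fun Λ hΛ =>
    (ENNReal.le_div_iff_mul_le (Or.inl hpos) (Or.inl hfin)).2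
      (card_mul_volume_le hK.1 (hK.1.inter hT.1) hLc.measurableSet hLs Set.inter_subset_left hΛ)
  have hB : 3 ^ n * volume K / volume (K ∩ T) ≠ ∞ :=
    ENNReal.div_ne_top (ENNReal.mul_ne_top (by simp) hK.2.1.measure_lt_top.ne) hpos
  obtain ⟨N, hN⟩ := ENNReal.exists_nat_gt hB
  obtain ⟨Λ, hΛ, hcov⟩ := exists_separated_cover (mem_of_mem_nhds hL0) hLs N fun Λ hΛ => by
    exact_mod_cast (hbound Λ hΛ).trans hN.le
  have hle : coveringNumber K T ≤ (Λ.card : ℕ∞) :=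
    sInf_le ⟨Λ, rfl, hcov.trans (Set.add_subset_add_left Set.inter_subset_right)⟩
  calc (coveringNumber K T : ℝ≥0∞) ≤ ((Λ.card : ℕ∞) : ℝ≥0∞) := ENat.toENNReal_le.2 hle
    _ = (Λ.card : ℝ≥0∞) := by simp
    _ ≤ _ := hbound Λ hΛ

end
end

section
/- Let K ⊆ ℝ^n be a convex body and let t ∈ [0,1) be such that the centroid satisfies b(K) ∈ t·E_K, where E_K is the inertial ellipsoid of K. Then vol(K ∩ -K) ≥ ((1-t)/2)^n · vol(K). -/
/-!
Write `b` for the centroid of `K` and `b = t e` with `e` in the inertial ellipsoid.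

The point `p = b - e` belongs to `K` (`centroid_sub_mem`): the standard deviation of a linear functional
over `K` never exceeds the distance from its mean to its maximum on `K` (`variance_le`). The latter
holds because a nonnegative affine function `Y` on `K` satisfies `E (Y ^ 2) ≤ 2 (E Y) ^ 2`
(`second_moment`), the tails of `Y` being submultiplicative by Brunn–Minkowski (`tail_submul`).

Since `0 = (1 - t) b + t p`, the homothety `x ↦ (1 - t) x + t p` sends `b` to `0`. It sends `K` into `K`
by convexity, and points reflected in `b` to points reflected in `0`. So it maps `K ∩ (2 b - K)` into
`K ∩ -K`, and scales volume by `(1 - t) ^ n`. The Milman–Pajor inequality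
`|K ∩ (2 b - K)| ≥ 2 ^ (-n) |K|` (`milman_pajor`) then gives the claim; it follows from the concavity
of `z ↦ |K ∩ (z - K)| ^ (1 / n)` on `K + K` and Jensen's inequality.

Both halves rest on the Brunn–Minkowski inequality (`bm_mul`, `bm_rpow`), which is derived from
the Prékopa–Leindler inequality (`prekopa_leindler`), itself proved by induction on the dimension.
-/

open MeasureTheory Pointwise
open scoped ENNReal

noncomputable section

/-- The centroid (barycenter) of a set `K`. -/
def centroid {n : ℕ} (K : Set (Euc n)) : Euc n :=
  (volume K).toReal⁻¹ • ∫ x in K, x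

/-- The covariance matrix of (the uniform measure on) `K`. -/
def covMatrix {n : ℕ} (K : Set (Euc n)) : Matrix (Fin n) (Fin n) ℝ :=
  Matrix.of ((volume K).toReal⁻¹ •
    ∫ x in K, fun i j => (x i - centroid K i) * (x j - centroid K j))

/-- The inertial ellipsoid `E_K = {x : xᵀ cov(K)⁻¹ x ≤ 1}`. -/
def inertialEllipsoid {n : ℕ} (K : Set (Euc n)) : Set (Euc n) :=
  {x | ∑ i, ∑ j, x i * (covMatrix K)⁻¹ i j * x j ≤ 1}

/-! ### Brunn–Minkowski and Prékopa–Leindler on the line -/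

/-- The one-dimensional Brunn–Minkowski inequality for compact sets: the translates `K + min L` and
`max K + L` both lie in `C` and meet in at most the point `max K + min L`. -/
lemma bm_one_compact {K L C : Set ℝ} (hK : IsCompact K) (hL : IsCompact L)
    (hK0 : K.Nonempty) (hL0 : L.Nonempty) (h : ∀ x ∈ K, ∀ y ∈ L, x + y ∈ C) :
    volume K + volume L ≤ volume C := by
  obtain ⟨k, hk⟩ := hK.exists_isGreatest hK0
  obtain ⟨l, hl⟩ := hL.exists_isLeast hL0
  have h1 : volume ((fun x => x + l) '' K) = volume K := by simp
  have h2 : volume ((fun x => k + x) '' L) = volume L := by simp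
  have hm2 : MeasurableSet ((fun x => k + x) '' L) :=
    (hL.image (by fun_prop)).measurableSet
  have hdis : AEDisjoint volume ((fun x => x + l) '' K) ((fun x => k + x) '' L) := by
    refine measure_mono_null (t := {k + l}) ?_ (by simp)
    rintro z ⟨⟨x, hx, rfl⟩, ⟨y, hy, hxy⟩⟩
    have := hk.2 hx
    have := hl.2 hy
    simp only at hxy
    simp only [Set.mem_singleton_iff]
    linarith
  rw [← h1, ← h2, ← measure_union₀ hm2.nullMeasurableSet hdis]
  apply measure_mono
  rintro z (⟨x, hx, rfl⟩ | ⟨x, hx, rfl⟩)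
  · exact h x hx l hl.1
  · exact h k hk.1 x hx

lemma bm_one {A B C : Set ℝ} (hA : MeasurableSet A) (hB : MeasurableSet B)
    (hA0 : A.Nonempty) (hB0 : B.Nonempty) (h : ∀ x ∈ A, ∀ y ∈ B, x + y ∈ C) :
    volume A + volume B ≤ volume C := by
  obtain ⟨p, hp⟩ := hA0
  obtain ⟨q, hq⟩ := hB0
  rw [hA.measure_eq_iSup_isCompact, hB.measure_eq_iSup_isCompact]
  simp only [iSup_and']
  have key : ∀ K, K ⊆ A → IsCompact K → ∀ L, L ⊆ B → IsCompact L →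
      volume K + volume L ≤ volume C := by
    intro K hKA hK L hLB hL
    -- adjoining a point of `A` and of `B` makes the compact sets nonempty
    refine le_trans (add_le_add (measure_mono (Set.subset_insert p K))
      (measure_mono (Set.subset_insert q L))) ?_
    refine bm_one_compact (hK.insert p) (hL.insert q) ⟨p, by simp⟩ ⟨q, by simp⟩ ?_
    rintro x (rfl | hx) y (rfl | hy)
    · exact h _ hp _ hq
    · exact h _ hp _ (hLB hy)
    · exact h _ (hKA hx) _ hq
    · exact h _ (hKA hx) _ (hLB hy)
  exact ENNReal.biSup_add_biSup_le' ⟨∅, by simp⟩ ⟨∅, by simp⟩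
    fun K hK L hL => key K hK.1 hK.2 L hL.1 hL.2

lemma bm_one_scaled {a b : ℝ} (ha : 0 < a) (hb : 0 < b) {A B C : Set ℝ}
    (hA : MeasurableSet A) (hB : MeasurableSet B)
    (hA0 : A.Nonempty) (hB0 : B.Nonempty) (h : ∀ x ∈ A, ∀ y ∈ B, a * x + b * y ∈ C) :
    ENNReal.ofReal a * volume A + ENNReal.ofReal b * volume B ≤ volume C := by
  have h1 : volume (a • A) = ENNReal.ofReal a * volume A := by
    rw [Measure.addHaar_smul]; simp [abs_of_pos ha]
  have h2 : volume (b • B) = ENNReal.ofReal b * volume B := by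
    rw [Measure.addHaar_smul]; simp [abs_of_pos hb]
  rw [← h1, ← h2]
  refine bm_one (hA.const_smul_of_ne_zero ha.ne') (hB.const_smul_of_ne_zero hb.ne')
    hA0.smul_set hB0.smul_set ?_
  rintro _ ⟨x, hx, rfl⟩ _ ⟨y, hy, rfl⟩
  exact h x hx y hy

/-- Layer-cake formula for a function with values in `[0, 1]`: only levels in `(0, 1)` contribute. -/
lemma layercake_unit {F : ℝ → ℝ} (hF : Measurable F) (h0 : ∀ x, 0 ≤ F x) (h1 : ∀ x, F x ≤ 1) :
    ∫⁻ x, ENNReal.ofReal (F x) = ∫⁻ s in Set.Ioo (0:ℝ) 1, volume {x | s < F x} := by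
  rw [lintegral_eq_lintegral_meas_lt volume (Filter.Eventually.of_forall h0) hF.aemeasurable,
    ← Set.Ioo_union_Ici_eq_Ioi one_pos, lintegral_union measurableSet_Ici]
  · have hz : ∫⁻ s in Set.Ici (1:ℝ), volume {x | s < F x} = 0 := by
      rw [setLIntegral_congr_fun (g := fun _ => 0) measurableSet_Ici]
      · simp
      · intro s hs
        have : {x | s < F x} = ∅ := by
          ext x; simpa using (h1 x).trans hs
        simp [this]
    rw [hz, add_zero]
  · rw [Set.disjoint_left]; rintro x ⟨_, h⟩ h'; exact absurd h (not_lt.2 h')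

/-- An additive form of the one-dimensional Prékopa–Leindler inequality, for functions bounded by `1`
whose suprema are `1`: the strict superlevel sets of `F`, `G` at a level `s < 1` are nonempty, so
one-dimensional Brunn–Minkowski applies at every level. -/
lemma pl_core {a b : ℝ} (ha : 0 < a) (hb : 0 < b) (hab : a + b = 1) {F G H : ℝ → ℝ}
    (hF : Measurable F) (hG : Measurable G) (hH : Measurable H)
    (hF0 : ∀ x, 0 ≤ F x) (hF1 : ∀ x, F x ≤ 1) (hG0 : ∀ x, 0 ≤ G x) (hG1 : ∀ x, G x ≤ 1)
    (hH0 : ∀ x, 0 ≤ H x) (hH1 : ∀ x, H x ≤ 1)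
    (hFs : ∀ s, 0 ≤ s → s < 1 → ∃ x, s < F x) (hGs : ∀ s, 0 ≤ s → s < 1 → ∃ x, s < G x)
    (h : ∀ x y, F x ^ a * G y ^ b ≤ H (a * x + b * y)) :
    ENNReal.ofReal a * (∫⁻ x, ENNReal.ofReal (F x)) +
      ENNReal.ofReal b * (∫⁻ x, ENNReal.ofReal (G x)) ≤ ∫⁻ x, ENNReal.ofReal (H x) := by
  rw [layercake_unit hF hF0 hF1, layercake_unit hG hG0 hG1, layercake_unit hH hH0 hH1]
  rw [← lintegral_const_mul' _ _ ENNReal.ofReal_ne_top,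
    ← lintegral_const_mul' _ _ ENNReal.ofReal_ne_top, ← lintegral_add_left]
  · refine setLIntegral_mono' measurableSet_Ioo ?_
    rintro s ⟨hs0, hs1⟩
    refine bm_one_scaled ha hb (measurableSet_lt measurable_const hF)
      (measurableSet_lt measurable_const hG) (hFs s hs0.le hs1) (hGs s hs0.le hs1) ?_
    intro x hx y hy
    refine lt_of_lt_of_le ?_ (h x y)
    have : s = s ^ a * s ^ b := by rw [← Real.rpow_add hs0, hab, Real.rpow_one]
    rw [this]
    exact mul_lt_mul'' (Real.rpow_lt_rpow hs0.le hx ha) (Real.rpow_lt_rpow hs0.le hy hb)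
      (by positivity) (by positivity)
  · refine Measurable.const_mul ?_ _
    exact Antitone.measurable fun s t hst => measure_mono fun x hx => lt_of_le_of_lt hst hx

lemma ennreal_amgm {a b : ℝ} (ha : 0 < a) (hb : 0 < b) (hab : a + b = 1) (x y : ℝ≥0∞) :
    x ^ a * y ^ b ≤ ENNReal.ofReal a * x + ENNReal.ofReal b * y := by
  rcases eq_or_ne x ⊤ with rfl | hx
  · simp [ENNReal.mul_top, ha]
  rcases eq_or_ne y ⊤ with rfl | hy
  · simp [ENNReal.mul_top, hb]
  lift x to NNReal using hx
  lift y to NNReal using hy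
  have := NNReal.geom_mean_le_arith_mean2_weighted a.toNNReal b.toNNReal x y
    (by rw [← Real.toNNReal_add ha.le hb.le, hab]; simp)
  rw [Real.coe_toNNReal _ ha.le, Real.coe_toNNReal _ hb.le] at this
  rw [← ENNReal.coe_rpow_of_nonneg _ ha.le, ← ENNReal.coe_rpow_of_nonneg _ hb.le]
  simp only [ENNReal.ofReal]
  exact_mod_cast this

/-- After division by its supremum, `f` exceeds every level below `1`; this provides the nonemptiness
of superlevel sets needed in `pl_core`. -/
lemma exists_lt_div_iSup {f : ℝ → ℝ≥0∞} (h0 : ⨆ x, f x ≠ 0) (ht : ⨆ x, f x ≠ ⊤) (s : ℝ)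
    (hs0 : 0 ≤ s) (hs : s < 1) : ∃ x, s < (f x / ⨆ x, f x).toReal := by
  have : ENNReal.ofReal s * (⨆ x, f x) < ⨆ x, f x := by
    calc ENNReal.ofReal s * (⨆ x, f x) < 1 * ⨆ x, f x :=
          ENNReal.mul_lt_mul_left h0 ht (by simpa using hs)
      _ = _ := one_mul _
  obtain ⟨x, hx⟩ := lt_iSup_iff.1 this
  refine ⟨x, ?_⟩
  have h1 : f x / ⨆ x, f x ≤ 1 := ENNReal.div_le_of_le_mul (by simpa using le_iSup f x)
  rw [← ENNReal.ofReal_lt_iff_lt_toReal hs0 (h1.trans_lt ENNReal.one_lt_top).ne]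
  rwa [ENNReal.lt_div_iff_mul_lt (by simp [h0]) (by simp [ht])]

/-- Prékopa–Leindler on the line for bounded `f`, `g`: normalise their suprema to `1`, apply `pl_core`,
and pass from the arithmetic to the geometric mean. -/
lemma pl_one_bdd {a b : ℝ} (ha : 0 < a) (hb : 0 < b) (hab : a + b = 1) {f g h : ℝ → ℝ≥0∞}
    (hf : Measurable f) (hg : Measurable g) (hh : Measurable h) {M : ℝ≥0∞} (hM : M ≠ ⊤)
    (hfM : ∀ x, f x ≤ M) (hgM : ∀ x, g x ≤ M)
    (H : ∀ x y, f x ^ a * g y ^ b ≤ h (a * x + b * y)) :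
    (∫⁻ x, f x) ^ a * (∫⁻ x, g x) ^ b ≤ ∫⁻ x, h x := by
  set A := ⨆ x, f x with hA
  set B := ⨆ x, g x with hB
  have hAt : A ≠ ⊤ := ((iSup_le hfM).trans_lt hM.lt_top).ne
  have hBt : B ≠ ⊤ := ((iSup_le hgM).trans_lt hM.lt_top).ne
  rcases eq_or_ne A 0 with hA0 | hA0
  · have : ∀ x, f x = 0 := by simpa [hA] using hA0
    simp [this, ha]
  rcases eq_or_ne B 0 with hB0 | hB0
  · have : ∀ x, g x = 0 := by simpa [hB] using hB0
    simp [this, hb]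
  set D := A ^ a * B ^ b with hD
  have hAa : A ^ a ≠ ⊤ := ENNReal.rpow_ne_top_of_nonneg ha.le hAt
  have hBb : B ^ b ≠ ⊤ := ENNReal.rpow_ne_top_of_nonneg hb.le hBt
  have hDt : D ≠ ⊤ := ENNReal.mul_ne_top hAa hBb
  have hD0 : D ≠ 0 := by
    simp [hD, hA0, hB0, hAt, hBt]
  have hf1 : ∀ x, f x / A ≤ 1 := fun x => ENNReal.div_le_of_le_mul (by simpa using le_iSup f x)
  have hg1 : ∀ x, g x / B ≤ 1 := fun x => ENNReal.div_le_of_le_mul (by simpa using le_iSup g x)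
  have ne1 : ∀ {x : ℝ≥0∞}, x ≤ 1 → x ≠ ⊤ := fun hx => (hx.trans_lt ENNReal.one_lt_top).ne
  -- `h / D` is cut off at `1`; the hypothesis survives because `f / A` and `g / B` are at most `1`
  have key := pl_core ha hb hab (F := fun x => (f x / A).toReal) (G := fun x => (g x / B).toReal)
    (H := fun x => (min (h x / D) 1).toReal)
    (by fun_prop) (by fun_prop) (by fun_prop) (fun _ => ENNReal.toReal_nonneg)
    (fun x => ENNReal.toReal_le_of_le_ofReal zero_le_one (by simpa using hf1 x))
    (fun _ => ENNReal.toReal_nonneg)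
    (fun x => ENNReal.toReal_le_of_le_ofReal zero_le_one (by simpa using hg1 x))
    (fun _ => ENNReal.toReal_nonneg)
    (fun x => ENNReal.toReal_le_of_le_ofReal zero_le_one (by simp))
    (exists_lt_div_iSup hA0 hAt) (exists_lt_div_iSup hB0 hBt)
    (by
      intro x y
      rw [ENNReal.toReal_rpow, ENNReal.toReal_rpow, ← ENNReal.toReal_mul]
      refine ENNReal.toReal_mono (ne1 (min_le_right _ _)) (le_min ?_ ?_)
      · rw [ENNReal.div_rpow_of_nonneg _ _ ha.le, ENNReal.div_rpow_of_nonneg _ _ hb.le]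
        refine le_trans (le_of_eq ?_) (ENNReal.div_le_div_right (H x y) D)
        rw [div_eq_mul_inv, div_eq_mul_inv, div_eq_mul_inv, hD,
          ENNReal.mul_inv (by simp [hBb]) (by simp [hAa])]
        ring
      · exact mul_le_one' (ENNReal.rpow_le_one (hf1 x) ha.le) (ENNReal.rpow_le_one (hg1 y) hb.le))
  have e1 : ∫⁻ x, f x = A * ∫⁻ x, ENNReal.ofReal (f x / A).toReal := by
    rw [← lintegral_const_mul' _ _ hAt]
    refine lintegral_congr fun x => ?_
    rw [ENNReal.ofReal_toReal (ne1 (hf1 x)), ENNReal.mul_div_cancel hA0 hAt]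
  have e2 : ∫⁻ x, g x = B * ∫⁻ x, ENNReal.ofReal (g x / B).toReal := by
    rw [← lintegral_const_mul' _ _ hBt]
    refine lintegral_congr fun x => ?_
    rw [ENNReal.ofReal_toReal (ne1 (hg1 x)), ENNReal.mul_div_cancel hB0 hBt]
  have e3 : D * ∫⁻ x, ENNReal.ofReal (min (h x / D) 1).toReal ≤ ∫⁻ x, h x := by
    rw [← lintegral_const_mul' _ _ hDt]
    refine lintegral_mono fun x => ?_
    simp only
    rw [ENNReal.ofReal_toReal (ne1 (min_le_right _ _))]
    calc D * min (h x / D) 1 ≤ D * (h x / D) := by gcongr; exact min_le_left _ _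
      _ = h x := ENNReal.mul_div_cancel hD0 hDt
  refine le_trans ?_ e3
  rw [e1, e2, ENNReal.mul_rpow_of_nonneg _ _ ha.le, ENNReal.mul_rpow_of_nonneg _ _ hb.le]
  rw [mul_mul_mul_comm]
  gcongr
  exact (ennreal_amgm ha hb hab _ _).trans key

/-- The Prékopa–Leindler inequality on the line. -/
lemma pl_one {a b : ℝ} (ha : 0 < a) (hb : 0 < b) (hab : a + b = 1) {f g h : ℝ → ℝ≥0∞}
    (hf : Measurable f) (hg : Measurable g) (hh : Measurable h)
    (H : ∀ x y, f x ^ a * g y ^ b ≤ h (a * x + b * y)) :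
    (∫⁻ x, f x) ^ a * (∫⁻ x, g x) ^ b ≤ ∫⁻ x, h x := by
  -- the bounded case applies to the truncations `min f M`, `min g M`, whose integrals converge
  have tr : ∀ {f : ℝ → ℝ≥0∞}, Measurable f → Filter.Tendsto (fun M : ℕ => ∫⁻ x, min (f x) M)
      Filter.atTop (nhds (∫⁻ x, f x)) := by
    intro f hf
    refine lintegral_tendsto_of_tendsto_of_monotone (fun n => by fun_prop)
      (Filter.Eventually.of_forall fun x n m hnm => by simp only; gcongr)
      (Filter.Eventually.of_forall fun x => ?_)
    have : Filter.Tendsto (fun M : ℕ => min (f x) (M : ℝ≥0∞)) Filter.atTop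
        (nhds (min (f x) ⊤)) := tendsto_const_nhds.min ENNReal.tendsto_nat_nhds_top
    simpa using this
  -- the product of the limits is continuous except at `0 * ⊤`, so vanishing integrals go first
  rcases eq_or_ne (∫⁻ x, f x) 0 with hf0 | hf0
  · simp [hf0, ha]
  rcases eq_or_ne (∫⁻ x, g x) 0 with hg0 | hg0
  · simp [hg0, hb]
  have t1 := (ENNReal.continuous_rpow_const (y := a)).continuousAt.tendsto.comp (tr hf)
  have t2 := (ENNReal.continuous_rpow_const (y := b)).continuousAt.tendsto.comp (tr hg)
  have t3 := ENNReal.Tendsto.mul t1 (Or.inl (by simp [hf0, ha.le])) t2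
    (Or.inl (by simp [hg0, hb.le]))
  refine le_of_tendsto' t3 fun M => ?_
  refine pl_one_bdd ha hb hab (hf.min measurable_const) (hg.min measurable_const) hh
    (M := (M : ℝ≥0∞)) (by simp) (fun x => min_le_right _ _) (fun x => min_le_right _ _) ?_
  intro x y
  refine le_trans ?_ (H x y)
  gcongr <;> exact min_le_left _ _

/-! ### Prékopa–Leindler and Brunn–Minkowski in dimension `n` -/

lemma piFinSuccAbove_symm_eq_cons {n : ℕ} (s : ℝ) (x : Fin n → ℝ) :
    (MeasurableEquiv.piFinSuccAbove (fun _ : Fin (n + 1) => ℝ) 0).symm (s, x) =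
      (Fin.cons s x : Fin (n + 1) → ℝ) := by
  simp [MeasurableEquiv.piFinSuccAbove, Fin.insertNthEquiv]

lemma lintegral_fin_succ {n : ℕ} {f : (Fin (n + 1) → ℝ) → ℝ≥0∞} (hf : Measurable f) :
    ∫⁻ x, f x = ∫⁻ s : ℝ, ∫⁻ x : Fin n → ℝ, f (Fin.cons s x) := by
  have e := (volume_preserving_piFinSuccAbove (fun _ : Fin (n + 1) => ℝ) 0).symm
  rw [← e.lintegral_comp hf, Measure.volume_eq_prod, lintegral_prod]
  · simp only [piFinSuccAbove_symm_eq_cons]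
  · exact (hf.comp e.measurable).aemeasurable

lemma measurable_cons {n : ℕ} :
    Measurable fun p : ℝ × (Fin n → ℝ) => (Fin.cons p.1 p.2 : Fin (n + 1) → ℝ) := by
  simp only [← piFinSuccAbove_symm_eq_cons]
  exact (MeasurableEquiv.piFinSuccAbove (fun _ : Fin (n + 1) => ℝ) 0).symm.measurable

/-- The Prékopa–Leindler inequality on `Fin n → ℝ`, by induction on `n`: for fixed first coordinates the
inequality in dimension `n` says that the partial integrals satisfy the hypothesis on the line. -/
theorem prekopa_leindler {a b : ℝ} (ha : 0 < a) (hb : 0 < b) (hab : a + b = 1) (n : ℕ) :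
    ∀ {f g h : (Fin n → ℝ) → ℝ≥0∞}, Measurable f → Measurable g → Measurable h →
    (∀ x y, f x ^ a * g y ^ b ≤ h (a • x + b • y)) →
    (∫⁻ x, f x) ^ a * (∫⁻ x, g x) ^ b ≤ ∫⁻ x, h x := by
  induction n with
  | zero =>
    intro f g h hf hg hh H
    have hv : volume (Set.univ : Set (Fin 0 → ℝ)) = 1 := by
      rw [volume_pi, Measure.pi_of_empty]; simp
    simp only [lintegral_unique, hv, mul_one]
    have e := H default default
    rw [Subsingleton.elim (a • (default : Fin 0 → ℝ) + b • default) default] at e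
    convert e using 4
  | succ n ih =>
    intro f g h hf hg hh H
    rw [lintegral_fin_succ hf, lintegral_fin_succ hg, lintegral_fin_succ hh]
    refine pl_one ha hb hab (hf.comp measurable_cons).lintegral_prod_right'
      (hg.comp measurable_cons).lintegral_prod_right'
      (hh.comp measurable_cons).lintegral_prod_right' ?_
    intro s t
    refine ih (hf.comp (measurable_cons.comp measurable_prodMk_left))
      (hg.comp (measurable_cons.comp measurable_prodMk_left))
      (hh.comp (measurable_cons.comp measurable_prodMk_left)) ?_
    intro x y
    refine (H _ _).trans (le_of_eq ?_)
    congr 1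
    ext i
    refine Fin.cases ?_ (fun j => ?_) i <;> simp

/-- Multiplicative Brunn–Minkowski: Prékopa–Leindler applied to indicator functions. Sets may be empty,
as `0 ^ a = 0` for `a > 0`. -/
lemma bm_mul {n : ℕ} {a b : ℝ} (ha : 0 < a) (hb : 0 < b) (hab : a + b = 1) {A B C : Set (Euc n)}
    (hA : MeasurableSet A) (hB : MeasurableSet B) (hC : MeasurableSet C)
    (h : ∀ x ∈ A, ∀ y ∈ B, a • x + b • y ∈ C) :
    volume A ^ a * volume B ^ b ≤ volume C := by
  let e := MeasurableEquiv.toLp 2 (Fin n → ℝ)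
  have he : MeasurePreserving e volume volume :=
    (EuclideanSpace.volume_preserving_symm_measurableEquiv_toLp (Fin n)).symm
  have key : ∀ S : Set (Euc n), MeasurableSet S →
      ∫⁻ x, (e ⁻¹' S).indicator (fun _ => (1 : ℝ≥0∞)) x = volume S := by
    intro S hS
    rw [lintegral_indicator_const (e.measurable hS), one_mul, he.measure_preimage_equiv]
  have H := prekopa_leindler ha hb hab n
    (measurable_const.indicator (e.measurable hA) : Measurable ((e ⁻¹' A).indicator fun _ => (1 : ℝ≥0∞)))
    (measurable_const.indicator (e.measurable hB) : Measurable ((e ⁻¹' B).indicator fun _ => (1 : ℝ≥0∞)))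
    (measurable_const.indicator (e.measurable hC) : Measurable ((e ⁻¹' C).indicator fun _ => (1 : ℝ≥0∞)))
    (by
      intro x y
      by_cases hx : x ∈ e ⁻¹' A
      · by_cases hy : y ∈ e ⁻¹' B
        · have : a • x + b • y ∈ e ⁻¹' C := h _ hx _ hy
          simp [Set.indicator_of_mem, hx, hy, this]
        · simp [Set.indicator_of_notMem hy, hb]
      · simp [Set.indicator_of_notMem hx, ha])
  rwa [key A hA, key B hB, key C hC] at H

/-- Brunn–Minkowski in the form with exponent `1 / n`. When both volumes are positive it follows from
`bm_mul` for the sets rescaled to volume `1`, with weights proportional to `a |A| ^ (1 / n)` and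
`b |B| ^ (1 / n)`. -/
lemma bm_rpow {n : ℕ} (hn : n ≠ 0) {a b : ℝ} (ha : 0 < a) (hb : 0 < b)
    {A B C : Set (Euc n)}
    (hA : MeasurableSet A) (hB : MeasurableSet B) (hC : MeasurableSet C)
    (hA0 : A.Nonempty) (hB0 : B.Nonempty)
    (hAt : volume A ≠ ⊤) (hBt : volume B ≠ ⊤) (hCt : volume C ≠ ⊤)
    (h : ∀ x ∈ A, ∀ y ∈ B, a • x + b • y ∈ C) :
    a * volume.real A ^ (n⁻¹ : ℝ) + b * volume.real B ^ (n⁻¹ : ℝ) ≤ volume.real C ^ (n⁻¹ : ℝ) := by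
  have hni : (0 : ℝ) < (n : ℝ)⁻¹ := by positivity
  -- a translate of a dilate of one set lies in `C`
  have sub : ∀ {c : ℝ} {S : Set (Euc n)} {v : Euc n}, 0 < c → (∀ x ∈ S, c • x + v ∈ C) →
      c * volume.real S ^ (n⁻¹ : ℝ) ≤ volume.real C ^ (n⁻¹ : ℝ) := by
    intro c S v hc hS
    have h1 : volume ((fun x => x + v) '' (c • S)) ≤ volume C := by
      apply measure_mono
      rintro _ ⟨_, ⟨x, hx, rfl⟩, rfl⟩
      exact hS x hx
    rw [Set.image_add_right, measure_preimage_add_right, Measure.addHaar_smul] at h1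
    have h2 := ENNReal.toReal_mono hCt h1
    rw [ENNReal.toReal_mul, ENNReal.toReal_ofReal (abs_nonneg _),
      abs_of_pos (by positivity), finrank_euclideanSpace_fin] at h2
    calc c * volume.real S ^ (n⁻¹ : ℝ) = (c ^ n * volume.real S) ^ (n⁻¹ : ℝ) := by
          rw [Real.mul_rpow (by positivity) measureReal_nonneg, Real.pow_rpow_inv_natCast hc.le hn]
      _ ≤ _ := Real.rpow_le_rpow (by positivity) h2 hni.le
  rcases eq_or_ne (volume.real A) 0 with hA' | hA'
  · obtain ⟨p, hp⟩ := hA0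
    rw [hA', Real.zero_rpow hni.ne', mul_zero, zero_add]
    exact sub (v := a • p) hb fun y hy => by rw [add_comm]; exact h p hp y hy
  rcases eq_or_ne (volume.real B) 0 with hB' | hB'
  · obtain ⟨p, hp⟩ := hB0
    rw [hB', Real.zero_rpow hni.ne', mul_zero, add_zero]
    exact sub (v := b • p) ha fun y hy => h y hy p hp
  set α := volume.real A ^ (n⁻¹ : ℝ) with hα
  set β := volume.real B ^ (n⁻¹ : ℝ) with hβ
  have hA1 : 0 < volume.real A := lt_of_le_of_ne measureReal_nonneg hA'.symm
  have hB1 : 0 < volume.real B := lt_of_le_of_ne measureReal_nonneg hB'.symm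
  have hα0 : 0 < α := by positivity
  have hβ0 : 0 < β := by positivity
  set m := a * α + b * β with hm
  have hm0 : 0 < m := by positivity
  have nrm : ∀ {S : Set (Euc n)}, volume S ≠ ⊤ → 0 < volume.real S →
      volume ((volume.real S ^ (n⁻¹ : ℝ))⁻¹ • S) = 1 := by
    intro S hSt hS
    rw [Measure.addHaar_smul, finrank_euclideanSpace_fin, abs_of_pos (by positivity), inv_pow,
      Real.rpow_inv_natCast_pow hS.le hn]
    rw [← ofReal_measureReal hSt, ← ENNReal.ofReal_mul (by positivity), inv_mul_cancel₀ hS.ne', ENNReal.ofReal_one]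
  have key := bm_mul (a := a * α / m) (b := b * β / m) (by positivity) (by positivity)
    (by rw [← add_div, ← hm, div_self hm0.ne'])
    (hA.const_smul_of_ne_zero (inv_ne_zero hα0.ne')) (hB.const_smul_of_ne_zero (inv_ne_zero hβ0.ne'))
    (hC.const_smul_of_ne_zero (inv_ne_zero hm0.ne')) (by
      rintro _ ⟨x, hx, rfl⟩ _ ⟨y, hy, rfl⟩
      refine ⟨_, h x hx y hy, ?_⟩
      simp only [smul_smul, smul_add]
      congr 2 <;> field_simp)
  rw [nrm hAt hA1, nrm hBt hB1, ENNReal.one_rpow, ENNReal.one_rpow, one_mul,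
    Measure.addHaar_smul, finrank_euclideanSpace_fin, abs_of_pos (by positivity)] at key
  have k2 := ENNReal.toReal_mono (ENNReal.mul_ne_top ENNReal.ofReal_ne_top hCt) key
  rw [ENNReal.toReal_mul, ENNReal.toReal_ofReal (by positivity), ENNReal.toReal_one] at k2
  have k3 : m ^ n ≤ volume.real C := by
    rw [inv_pow, inv_mul_eq_div, one_le_div (by positivity)] at k2
    exact k2
  calc m = (m ^ n) ^ (n⁻¹ : ℝ) := (Real.pow_rpow_inv_natCast hm0.le hn).symm
    _ ≤ _ := Real.rpow_le_rpow (by positivity) k3 hni.le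

/-! ### Second moments of affine functions -/

/-- The fibre `s + t = u` of the positive quadrant projects onto the interval `(0, u)` of length `u`. -/
lemma lintegral_lintegral_add {F : ℝ → ℝ≥0∞} (hF : Measurable F) :
    ∫⁻ s in Set.Ioi (0 : ℝ), ∫⁻ t in Set.Ioi (0 : ℝ), F (s + t) =
      ∫⁻ u in Set.Ioi (0 : ℝ), ENNReal.ofReal u * F u := by
  have h1 : ∀ s : ℝ, ∫⁻ t in Set.Ioi (0 : ℝ), F (s + t) =
      ∫⁻ u, (Set.Ioi s).indicator F u := by
    intro s
    rw [← lintegral_indicator measurableSet_Ioi,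
      ← lintegral_add_left_eq_self (fun u => (Set.Ioi s).indicator F u) s]
    refine lintegral_congr fun t => ?_
    simp [Set.indicator]
  have h2 : ∀ s u : ℝ, (Set.Ioi (0 : ℝ)).indicator (fun s => (Set.Ioi s).indicator F u) s =
      (Set.Ioo 0 u).indicator (fun _ => F u) s := by
    intro s u
    by_cases hs : 0 < s <;> by_cases hu : s < u <;> simp [Set.indicator, hs, hu]
  have hm : Measurable (Function.uncurry fun s u : ℝ => (Set.Ioo 0 u).indicator (fun _ => F u) s) := by
    have : (Function.uncurry fun s u : ℝ => (Set.Ioo 0 u).indicator (fun _ => F u) s) =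
        Set.indicator {p : ℝ × ℝ | 0 < p.1 ∧ p.1 < p.2} (fun p => F p.2) := by
      ext p; simp [Function.uncurry, Set.indicator]
    rw [this]
    refine (hF.comp measurable_snd).indicator ?_
    exact (measurableSet_lt measurable_const measurable_fst).inter
      (measurableSet_lt measurable_fst measurable_snd)
  simp_rw [h1]
  rw [← lintegral_indicator measurableSet_Ioi]
  have h3 : ∀ s : ℝ, (Set.Ioi (0 : ℝ)).indicator (fun s => ∫⁻ u, (Set.Ioi s).indicator F u) s =
      ∫⁻ u, (Set.Ioo 0 u).indicator (fun _ => F u) s := by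
    intro s
    simp_rw [← h2]
    by_cases hs : 0 < s <;> simp [Set.indicator, hs]
  simp_rw [h3]
  rw [lintegral_lintegral_swap hm.aemeasurable, ← lintegral_indicator measurableSet_Ioi]
  refine lintegral_congr fun u => ?_
  rw [lintegral_indicator_const measurableSet_Ioo, Real.volume_Ioo, sub_zero, mul_comm]
  by_cases hu : 0 < u
  · simp [hu]
  · simp [hu, ENNReal.ofReal_of_nonpos (not_lt.1 hu)]

/-- If `Y` is affine and nonnegative on `K`, its tail `F s = |K ∩ {Y ≥ s}|` satisfies
`F 0 * F (s + t) ≤ F s * F t`. Indeed `{Y ≥ s}` contains the convex combination of `K` and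
`{Y ≥ s + t}` with weights `t / (s + t)` and `s / (s + t)`, and likewise with `s`, `t` exchanged;
the product of the two resulting inequalities from `bm_mul` is the claim. -/
lemma tail_submul {n : ℕ} {K : Set (Euc n)} (hK : Convex ℝ K) (hKc : IsCompact K)
    {Y : Euc n → ℝ} (hY : Continuous Y)
    (hYa : ∀ x y a b, 0 ≤ a → 0 ≤ b → a + b = 1 → Y (a • x + b • y) = a * Y x + b * Y y)
    (hY0 : ∀ x ∈ K, 0 ≤ Y x) {s t : ℝ} (hs : 0 < s) (ht : 0 < t) :
    volume K * volume (K ∩ {x | s + t ≤ Y x}) ≤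
      volume (K ∩ {x | s ≤ Y x}) * volume (K ∩ {x | t ≤ Y x}) := by
  have hm : ∀ r, MeasurableSet (K ∩ {x | r ≤ Y x}) := fun r =>
    hKc.measurableSet.inter (measurableSet_le measurable_const hY.measurable)
  have key : ∀ {s t : ℝ}, 0 < s → 0 < t →
      volume K ^ (t / (s + t)) * volume (K ∩ {x | s + t ≤ Y x}) ^ (s / (s + t)) ≤
        volume (K ∩ {x | s ≤ Y x}) := by
    intro s t hs ht
    have hst : t / (s + t) + s / (s + t) = 1 := by field_simp; ring
    refine bm_mul (by positivity) (by positivity) hst hKc.measurableSet (hm _) (hm _) ?_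
    rintro x hx y ⟨hy, hy'⟩
    refine ⟨hK hx hy (by positivity) (by positivity) hst, ?_⟩
    simp only [Set.mem_ofPred_eq] at hy' ⊢
    rw [hYa _ _ _ _ (by positivity) (by positivity) hst]
    have h1 : 0 ≤ t / (s + t) * Y x := mul_nonneg (by positivity) (hY0 x hx)
    have h2 : s / (s + t) * (s + t) ≤ s / (s + t) * Y y := by gcongr
    rw [div_mul_cancel₀ _ (by positivity)] at h2
    linarith
  have k1 := key hs ht
  have k2 := key ht hs
  rw [add_comm t s] at k2
  have hst : t / (s + t) + s / (s + t) = 1 := by field_simp; ring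
  have e : ∀ x : ℝ≥0∞, x = x ^ (t / (s + t)) * x ^ (s / (s + t)) := fun x => by
    rw [← ENNReal.rpow_add_of_nonneg _ _ (by positivity) (by positivity), hst, ENNReal.rpow_one]
  calc volume K * volume (K ∩ {x | s + t ≤ Y x}) =
      (volume K ^ (t / (s + t)) * volume (K ∩ {x | s + t ≤ Y x}) ^ (s / (s + t))) *
      (volume K ^ (s / (s + t)) * volume (K ∩ {x | s + t ≤ Y x}) ^ (t / (s + t))) := by
        nth_rewrite 1 [e (volume K), e (volume (K ∩ {x | s + t ≤ Y x}))]
        ring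
    _ ≤ _ := mul_le_mul' k1 k2

/-- For `Y` affine and nonnegative on `K`, the mean of `Y ^ 2` over `K` is at most twice the square of
the mean of `Y`: integrate `tail_submul` over all `s, t > 0`. -/
lemma second_moment {n : ℕ} {K : Set (Euc n)} (hK : Convex ℝ K) (hKc : IsCompact K)
    {Y : Euc n → ℝ} (hY : Continuous Y)
    (hYa : ∀ x y a b, 0 ≤ a → 0 ≤ b → a + b = 1 → Y (a • x + b • y) = a * Y x + b * Y y)
    (hY0 : ∀ x ∈ K, 0 ≤ Y x) :
    volume.real K * ∫ x in K, Y x ^ 2 ≤ 2 * (∫ x in K, Y x) ^ 2 := by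
  set F : ℝ → ℝ≥0∞ := fun s => volume (K ∩ {x | s ≤ Y x}) with hFdef
  have hFm : Measurable F := Antitone.measurable fun s t hst =>
    measure_mono fun x hx => ⟨hx.1, hst.trans hx.2⟩
  have hμ : ∀ s, volume.restrict K {x | s ≤ Y x} = F s := fun s => by
    rw [Measure.restrict_apply (measurableSet_le measurable_const hY.measurable), Set.inter_comm]
  have hae : 0 ≤ᵐ[volume.restrict K] Y :=
    (ae_restrict_iff' hKc.measurableSet).2 (Filter.Eventually.of_forall hY0)
  have i1 : ENNReal.ofReal (∫ x in K, Y x) = ∫⁻ s in Set.Ioi (0 : ℝ), F s := by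
    rw [ofReal_integral_eq_lintegral_ofReal (hY.continuousOn.integrableOn_compact hKc) hae,
      lintegral_eq_lintegral_meas_le _ hae hY.aemeasurable]
    simp_rw [hμ]
  have i2 : ENNReal.ofReal (∫ x in K, Y x ^ 2) =
      2 * ∫⁻ s in Set.Ioi (0 : ℝ), ENNReal.ofReal s * F s := by
    rw [ofReal_integral_eq_lintegral_ofReal
      (f := fun x => Y x ^ 2) ((hY.pow 2).continuousOn.integrableOn_compact hKc)
      (Filter.Eventually.of_forall fun x => sq_nonneg _)]
    have := lintegral_rpow_eq_lintegral_meas_le_mul (volume.restrict K) hae hY.aemeasurable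
      (p := 2) two_pos
    simp only [Real.rpow_two, ENNReal.ofReal_ofNat] at this
    rw [this]
    congr 1
    refine lintegral_congr fun s => ?_
    rw [hμ, mul_comm]; norm_num
  have main : volume K * ENNReal.ofReal (∫ x in K, Y x ^ 2) ≤
      2 * ENNReal.ofReal (∫ x in K, Y x) ^ 2 := by
    rw [i1, i2, ← lintegral_lintegral_add hFm, mul_left_comm]
    gcongr
    rw [← lintegral_const_mul' _ _ hKc.measure_ne_top, sq, ← lintegral_mul_const _ hFm]
    refine setLIntegral_mono' measurableSet_Ioi fun s hs => ?_
    rw [← lintegral_const_mul' _ _ hKc.measure_ne_top, ← lintegral_const_mul _ hFm]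
    refine setLIntegral_mono' measurableSet_Ioi fun t ht => ?_
    exact tail_submul hK hKc hY hYa hY0 hs ht
  have h0 : 0 ≤ ∫ x in K, Y x := setIntegral_nonneg hKc.measurableSet hY0
  have := ENNReal.toReal_mono (by finiteness) main
  rw [ENNReal.toReal_mul, ENNReal.toReal_mul, ENNReal.toReal_pow, ENNReal.toReal_ofReal h0,
    ENNReal.toReal_ofReal (by positivity)] at this
  simpa [Measure.real] using this

/-! ### The Milman–Pajor inequality -/

/-- The set `K ∩ (z - K)`, which is symmetric about `z / 2`. -/
def symmSection {n : ℕ} (K : Set (Euc n)) (z : Euc n) : Set (Euc n) := {x | x ∈ K ∧ z - x ∈ K}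

lemma isCompact_symmSection {n : ℕ} {K : Set (Euc n)} (hKc : IsCompact K) (z : Euc n) :
    IsCompact (symmSection K z) :=
  hKc.inter_right (hKc.isClosed.preimage (by fun_prop : Continuous fun x => z - x))

lemma symmSection_nonempty_iff {n : ℕ} {K : Set (Euc n)} {z : Euc n} :
    (symmSection K z).Nonempty ↔ z ∈ K + K := by
  constructor
  · rintro ⟨x, hx, hzx⟩
    exact ⟨x, hx, z - x, hzx, by simp⟩
  · rintro ⟨x, hx, y, hy, rfl⟩
    exact ⟨x, hx, by simpa using hy⟩

/-- The volume of `K ∩ (z - K)` is continuous in `z`, by dominated convergence: the boundary of the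
convex set `K` is null. -/
lemma continuous_symmSection {n : ℕ} {K : Set (Euc n)} (hK : Convex ℝ K) (hKc : IsCompact K) :
    Continuous fun z => volume.real (symmSection K z) := by
  have e : ∀ z, volume.real (symmSection K z) =
      ∫ x, K.indicator (fun _ => (1 : ℝ)) x * K.indicator (fun _ => (1 : ℝ)) (z - x) := by
    intro z
    rw [← integral_indicator_one (isCompact_symmSection hKc z).measurableSet]
    refine integral_congr_ae (Filter.Eventually.of_forall fun x => ?_)
    by_cases h1 : x ∈ K <;> by_cases h2 : z - x ∈ K <;> simp [symmSection, Set.indicator, h1, h2]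
  simp_rw [e]
  have hm : Measurable (K.indicator fun _ : Euc n => (1 : ℝ)) :=
    measurable_const.indicator hKc.measurableSet
  refine continuous_iff_continuousAt.2 fun z₀ => ?_
  refine continuousAt_of_dominated (bound := K.indicator fun _ => (1 : ℝ)) ?_ ?_ ?_ ?_
  · exact Filter.Eventually.of_forall fun z =>
      (hm.mul (hm.comp (measurable_const.sub measurable_id))).aestronglyMeasurable
  · refine Filter.Eventually.of_forall fun z => Filter.Eventually.of_forall fun x => ?_
    by_cases h1 : x ∈ K <;> by_cases h2 : z - x ∈ K <;> simp [Set.indicator, h1, h2]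
  · exact (integrable_indicator_iff hKc.measurableSet).2 (by simp [hKc.measure_lt_top])
  · have h0 : volume ((fun x => z₀ - x) ⁻¹' frontier K) = 0 := by
      rw [(Measure.measurePreserving_sub_left volume z₀).measure_preimage
        measurableSet_frontier.nullMeasurableSet]
      exact hK.addHaar_frontier volume
    filter_upwards [compl_mem_ae_iff.mpr h0] with x hx
    refine continuousAt_const.mul ?_
    have : ContinuousAt (K.indicator fun _ : Euc n => (1 : ℝ)) (z₀ - x) :=
      continuousOn_const.continuousAt_indicator hx
    exact ContinuousAt.comp (g := K.indicator fun _ : Euc n => (1 : ℝ)) (f := fun z => z - x)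
      this (by fun_prop)

lemma concaveOn_symmSection {n : ℕ} (hn : n ≠ 0) {K : Set (Euc n)} (hK : Convex ℝ K)
    (hKc : IsCompact K) :
    ConcaveOn ℝ (K + K) fun z => volume.real (symmSection K z) ^ (n⁻¹ : ℝ) := by
  refine concaveOn_iff_forall_pos.2 ⟨hK.add hK, fun z hz w hw a b ha hb hab => ?_⟩
  have cpt := isCompact_symmSection hKc
  refine bm_rpow hn ha hb (cpt z).measurableSet (cpt w).measurableSet (cpt _).measurableSet
    (symmSection_nonempty_iff.2 hz) (symmSection_nonempty_iff.2 hw) (cpt z).measure_ne_top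
    (cpt w).measure_ne_top (cpt _).measure_ne_top ?_
  rintro x ⟨hx, hzx⟩ y ⟨hy, hwy⟩
  refine ⟨hK hx hy ha.le hb.le hab, ?_⟩
  convert hK hzx hwy ha.le hb.le hab using 1
  module

/-- The volume of `K ∩ (z - K)` is the convolution of the indicator of `K` with itself, that is, the
(unnormalised) density of `x + y` for `x`, `y` in `K`. -/
lemma setIntegral_setIntegral_add {n : ℕ} {K : Set (Euc n)} (hKc : IsCompact K)
    {F : Euc n → ℝ} (hF : Continuous F) :
    ∫ x in K, ∫ y in K, F (x + y) = ∫ z, volume.real (symmSection K z) * F z := by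
  set T : Set (Euc n × Euc n) := {p | p.1 ∈ K ∧ p.2 - p.1 ∈ K} with hT
  have hTc : IsCompact T := by
    have : T = (fun p : Euc n × Euc n => (p.1, p.1 + p.2)) '' (K ×ˢ K) := by
      ext ⟨x, z⟩
      constructor
      · rintro ⟨h1, h2⟩
        exact ⟨(x, z - x), ⟨h1, h2⟩, by simp⟩
      · rintro ⟨⟨x, y⟩, ⟨h1, h2⟩, h⟩
        simp only [Prod.mk.injEq] at h
        obtain ⟨rfl, rfl⟩ := h
        exact ⟨h1, by simpa using h2⟩
    rw [this]
    exact (hKc.prod hKc).image (by fun_prop)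
  have hint : Integrable (Function.uncurry fun x z => T.indicator (fun p => F p.2) (x, z))
      ((volume : Measure (Euc n)).prod volume) := by
    have : IntegrableOn (fun p : Euc n × Euc n => F p.2) T (volume.prod volume) :=
      (hF.comp continuous_snd).continuousOn.integrableOn_compact hTc
    exact this.integrable_indicator hTc.measurableSet
  calc ∫ x in K, ∫ y in K, F (x + y)
      = ∫ x, ∫ z, T.indicator (fun p => F p.2) (x, z) := by
        rw [← integral_indicator hKc.measurableSet]
        refine integral_congr_ae (Filter.Eventually.of_forall fun x => ?_)
        simp only
        rw [← integral_add_left_eq_self (fun z => T.indicator (fun p => F p.2) (x, z)) x]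
        by_cases hx : x ∈ K
        · rw [Set.indicator_of_mem hx, ← integral_indicator hKc.measurableSet]
          refine integral_congr_ae (Filter.Eventually.of_forall fun y => ?_)
          by_cases hy : y ∈ K <;> simp [hT, Set.indicator, hx, hy]
        · rw [Set.indicator_of_notMem hx]
          simp [hT, Set.indicator, hx]
    _ = ∫ z, ∫ x, T.indicator (fun p => F p.2) (x, z) := integral_integral_swap hint
    _ = _ := by
        refine integral_congr_ae (Filter.Eventually.of_forall fun z => ?_)
        simp only
        rw [show (fun x => T.indicator (fun p => F p.2) (x, z)) =
          (symmSection K z).indicator (fun _ => F z) by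
            ext x; by_cases h1 : x ∈ K <;> by_cases h2 : z - x ∈ K <;>
              simp [hT, symmSection, Set.indicator, h1, h2]]
        rw [integral_indicator (isCompact_symmSection hKc z).measurableSet, setIntegral_const,
          smul_eq_mul]

/-- Jensen for the concave function `z ↦ |K ∩ (z - K)| ^ (1 / n)` on `K + K` and the random point `x + y`,
with `x`, `y` independent and uniform in `K`; the mean of `x + y` is `2 b`. -/
lemma jensen_symmSection {n : ℕ} (hn : n ≠ 0) {K : Set (Euc n)} (hK : Convex ℝ K)
    (hKc : IsCompact K) (hV : 0 < volume.real K) {b : Euc n}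
    (hb : ∫ x in K, x = volume.real K • b) :
    ∫ x in K, ∫ y in K, volume.real (symmSection K (x + y)) ^ (n⁻¹ : ℝ) ≤
      volume.real K ^ 2 * volume.real (symmSection K ((2 : ℝ) • b)) ^ (n⁻¹ : ℝ) := by
  have hni : (0 : ℝ) < (n : ℝ)⁻¹ := by positivity
  have hV0 : volume K ≠ 0 := fun h => by simp [Measure.real, h] at hV
  set ν := ProbabilityTheory.cond volume K with hν
  have hprob : IsProbabilityMeasure ν :=
    ProbabilityTheory.cond_isProbabilityMeasure_of_finite hV0 hKc.measure_ne_top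
  have hνint : ∀ {E : Type} [NormedAddCommGroup E] [NormedSpace ℝ E] (φ : Euc n → E),
      ∫ x, φ x ∂ν = (volume.real K)⁻¹ • ∫ x in K, φ x := by
    intro E _ _ φ
    rw [hν, ProbabilityTheory.cond, integral_smul_measure, ENNReal.toReal_inv]
    rfl
  have hνK : ∀ᵐ x ∂ν, x ∈ K := ProbabilityTheory.ae_cond_mem hKc.measurableSet
  have hP1 : ∀ᵐ p ∂ν.prod ν, p.1 ∈ K := Measure.quasiMeasurePreserving_fst.ae hνK
  have hP2 : ∀ᵐ p ∂ν.prod ν, p.2 ∈ K := Measure.quasiMeasurePreserving_snd.ae hνK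
  have hint : ∀ {E : Type} [NormedAddCommGroup E] [MeasurableSpace E] [BorelSpace E]
      [SecondCountableTopology E] (φ : Euc n × Euc n → E),
      Continuous φ → Integrable φ (ν.prod ν) := by
    intro E _ _ _ _ φ hφ
    obtain ⟨C, hC⟩ := (hKc.prod hKc).exists_bound_of_continuousOn hφ.continuousOn
    refine Integrable.of_bound hφ.measurable.aestronglyMeasurable C ?_
    filter_upwards [hP1, hP2] with p h1 h2 using hC p ⟨h1, h2⟩
  have hc := (continuous_symmSection hK hKc).rpow_const (p := (n : ℝ)⁻¹) (fun z => Or.inr hni.le)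
  have J := (concaveOn_symmSection hn hK hKc).le_map_integral (μ := ν.prod ν)
    (f := fun p => p.1 + p.2) hc.continuousOn (hKc.add hKc).isClosed
    (by filter_upwards [hP1, hP2] with p h1 h2 using Set.add_mem_add h1 h2)
    (hint _ (by fun_prop)) (hint _ (hc.comp (by fun_prop)))
  have hmean : ∫ x, x ∂ν = b := by
    rw [hνint, hb, smul_smul, inv_mul_cancel₀ hV.ne', one_smul]
  rw [integral_add (hint _ continuous_fst) (hint _ continuous_snd), integral_fun_fst (fun x => x),
    integral_fun_snd (fun x => x), hmean,
    integral_prod (fun p : Euc n × Euc n => volume.real (symmSection K (p.1 + p.2)) ^ (n⁻¹ : ℝ))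
      (hint _ (hc.comp (by fun_prop)))] at J
  simp only [hνint, probReal_univ, one_smul, smul_eq_mul, integral_const_mul, ← two_smul ℝ b] at J
  rw [← mul_assoc, ← mul_inv, ← sq, inv_mul_le_iff₀ (by positivity)] at J
  exact J

/-- The Milman–Pajor inequality: a convex body meets its reflection in its centroid `b` in at least
a fraction `2 ^ (-n)` of its volume. With `g z = |K ∩ (z - K)|`, whose integral over `K + K = 2 K` is
`|K| ^ 2`, Jensen bounds `∫ g ^ (1 + 1 / n)` by `|K| ^ 2 * g (2 b) ^ (1 / n)`, while convexity of the
power `1 + 1 / n` bounds it below. -/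
theorem milman_pajor {n : ℕ} (hn : n ≠ 0) {K : Set (Euc n)} (hK : Convex ℝ K)
    (hKc : IsCompact K) (hV : 0 < volume.real K) {b : Euc n}
    (hb : ∫ x in K, x = volume.real K • b) :
    volume.real K / 2 ^ n ≤ volume.real (symmSection K ((2 : ℝ) • b)) := by
  have hni : (0 : ℝ) < (n : ℝ)⁻¹ := by positivity
  set V := volume.real K with hVdef
  set g : Euc n → ℝ := fun z => volume.real (symmSection K z) with hg
  have hgc : Continuous g := continuous_symmSection hK hKc
  have hg0 : ∀ z, 0 ≤ g z := fun z => measureReal_nonneg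
  have hGc := hgc.rpow_const (p := (n : ℝ)⁻¹) (fun z => Or.inr hni.le)
  have hgz : ∀ z, z ∉ K + K → g z = 0 := by
    intro z hz
    rw [← symmSection_nonempty_iff, Set.not_nonempty_iff_eq_empty] at hz
    simp [hg, hz]
  have h2K : IsCompact (K + K) := hKc.add hKc
  have hvol : volume.real (K + K) = 2 ^ n * V := by
    have : K + K = (2 : ℝ) • K := by
      rw [← one_add_one_eq_two (R := ℝ), hK.add_smul zero_le_one zero_le_one, one_smul]
    rw [this, Measure.real, Measure.addHaar_smul_of_nonneg _ zero_le_two,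
      finrank_euclideanSpace_fin, ENNReal.toReal_mul, ENNReal.toReal_ofReal (by positivity)]
    rfl
  have hmass : ∫ z in K + K, g z = V ^ 2 := by
    have := setIntegral_setIntegral_add hKc (F := fun _ => 1) continuous_const
    simp only [setIntegral_const, smul_eq_mul, mul_one] at this
    rw [setIntegral_eq_integral_of_forall_compl_eq_zero hgz, ← this, sq]
  set c := V / 2 ^ n with hc
  have hc0 : 0 < c := by positivity
  -- tangent line at `c`, the mean of `g` over `K + K`, to the convex function `u ↦ u ^ (1 + 1 / n)`
  have hpt : ∀ u : ℝ, 0 ≤ u → c ^ (n⁻¹ : ℝ) * (u + (n : ℝ)⁻¹ * (u - c)) ≤ u * u ^ (n⁻¹ : ℝ) := by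
    intro u hu
    have B := one_add_mul_self_le_rpow_one_add (s := u / c - 1)
      (by linarith [show 0 ≤ u / c by positivity]) (p := 1 + (n : ℝ)⁻¹) (by linarith)
    rw [add_sub_cancel, Real.rpow_add' (by positivity) (by positivity), Real.rpow_one,
      Real.div_rpow hu hc0.le] at B
    have hcp : 0 < c ^ (n⁻¹ : ℝ) := by positivity
    calc c ^ (n⁻¹ : ℝ) * (u + (n : ℝ)⁻¹ * (u - c)) =
        (1 + (1 + (n : ℝ)⁻¹) * (u / c - 1)) * (c * c ^ (n⁻¹ : ℝ)) := by field_simp; ring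
      _ ≤ (u / c * (u ^ (n⁻¹ : ℝ) / c ^ (n⁻¹ : ℝ))) * (c * c ^ (n⁻¹ : ℝ)) := by gcongr
      _ = u * u ^ (n⁻¹ : ℝ) := by field_simp
  have J := jensen_symmSection hn hK hKc hV hb
  rw [setIntegral_setIntegral_add hKc hGc,
    ← setIntegral_eq_integral_of_forall_compl_eq_zero (s := K + K)
      (fun z hz => by change g z * _ = 0; rw [hgz z hz, zero_mul])] at J
  have hL : c ^ (n⁻¹ : ℝ) * V ^ 2 ≤ ∫ z in K + K, g z * g z ^ (n⁻¹ : ℝ) := by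
    have io : ∀ {φ : Euc n → ℝ}, Continuous φ → IntegrableOn φ (K + K) := fun hφ =>
      hφ.continuousOn.integrableOn_compact h2K
    calc c ^ (n⁻¹ : ℝ) * V ^ 2 =
        ∫ z in K + K, c ^ (n⁻¹ : ℝ) * (g z + (n : ℝ)⁻¹ * (g z - c)) := by
          rw [integral_const_mul, integral_add (io hgc) (io (by fun_prop)), integral_const_mul,
            integral_sub (io hgc) (io continuous_const), setIntegral_const, hmass, hvol, hc]
          simp only [smul_eq_mul]
          field_simp
          ring
      _ ≤ _ := setIntegral_mono (io (by fun_prop)) (io (hgc.mul hGc)) fun z => hpt _ (hg0 z)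
  have hfin : c ^ (n⁻¹ : ℝ) ≤ g ((2 : ℝ) • b) ^ (n⁻¹ : ℝ) := by
    have := hL.trans J
    rw [mul_comm] at this
    exact le_of_mul_le_mul_left this (by positivity)
  exact (Real.rpow_le_rpow_iff hc0.le (hg0 _) hni).1 hfin

/-! ### Covariance and the inertial ellipsoid -/

lemma covMatrix_apply {n : ℕ} {K : Set (Euc n)} (hKc : IsCompact K) (i j : Fin n) :
    covMatrix K i j = (volume.real K)⁻¹ *
      ∫ x in K, (x i - centroid K i) * (x j - centroid K j) := by
  have hc : ∀ i j, IntegrableOn (fun x : Euc n => (x i - centroid K i) * (x j - centroid K j)) K :=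
    fun i j => (by fun_prop : Continuous fun x : Euc n =>
      (x i - centroid K i) * (x j - centroid K j)).continuousOn.integrableOn_compact hKc
  rw [covMatrix, Matrix.of_apply, Pi.smul_apply, Pi.smul_apply, smul_eq_mul,
    eval_integral (fun i => Integrable.of_eval (hc i)), eval_integral (hc i)]
  rfl

lemma dotProduct_covMatrix_mulVec {n : ℕ} {K : Set (Euc n)} (hKc : IsCompact K)
    (v w : Fin n → ℝ) :
    v ⬝ᵥ (covMatrix K).mulVec w = (volume.real K)⁻¹ *
      ∫ x in K, (∑ i, v i * (x i - centroid K i)) * (∑ j, w j * (x j - centroid K j)) := by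
  have hc : ∀ {φ : Euc n → ℝ}, Continuous φ → IntegrableOn φ K := fun h =>
    h.continuousOn.integrableOn_compact hKc
  simp only [dotProduct, Matrix.mulVec, Finset.sum_mul_sum]
  rw [integral_finsetSum _ fun i _ => hc (by fun_prop), Finset.mul_sum]
  refine Finset.sum_congr rfl fun i _ => ?_
  rw [integral_finsetSum _ fun i _ => hc (by fun_prop), Finset.mul_sum, Finset.mul_sum]
  refine Finset.sum_congr rfl fun j _ => ?_
  have e : ∀ x : Euc n, v i * (x i - centroid K i) * (w j * (x j - centroid K j)) =
      v i * w j * ((x i - centroid K i) * (x j - centroid K j)) := fun x => by ring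
  rw [covMatrix_apply hKc, integral_congr_ae (Filter.Eventually.of_forall e),
    integral_const_mul]
  ring

lemma IsConvexBody.volume_real_pos {n : ℕ} {K : Set (Euc n)} (hK : IsConvexBody K) :
    0 < volume.real K :=
  ENNReal.toReal_pos (Measure.measure_pos_of_nonempty_interior _ hK.2.2).ne' hK.2.1.measure_ne_top

lemma IsConvexBody.integral_eq {n : ℕ} {K : Set (Euc n)} (hK : IsConvexBody K) :
    ∫ x in K, x = volume.real K • centroid K := by
  rw [centroid, smul_smul]
  change _ = (volume.real K * (volume.real K)⁻¹) • _
  rw [mul_inv_cancel₀ hK.volume_real_pos.ne', one_smul]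

/-- A vector in the kernel of the covariance matrix gives a functional that is constant on the interior
of `K`, hence vanishes. -/
lemma isUnit_det_covMatrix {n : ℕ} {K : Set (Euc n)} (hK : IsConvexBody K) :
    IsUnit (covMatrix K).det := by
  rw [← Matrix.isUnit_iff_isUnit_det, ← Matrix.mulVec_injective_iff_isUnit]
  refine (injective_iff_map_eq_zero (Matrix.mulVecLin (covMatrix K))).2 fun v hv => ?_
  rw [Matrix.mulVecLin_apply] at hv
  have h0 := dotProduct_covMatrix_mulVec hK.2.1 v v
  rw [hv, dotProduct_zero, eq_comm, mul_eq_zero, or_iff_right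
    (inv_ne_zero hK.volume_real_pos.ne')] at h0
  set W : Euc n → ℝ := fun x => ∑ i, v i * (x i - centroid K i) with hW
  have hWc : Continuous W := by fun_prop
  have hae : W =ᵐ[volume.restrict (interior K)] fun _ => 0 := by
    have h1 := (setIntegral_eq_zero_iff_of_nonneg_ae (f := fun x => W x * W x)
      (Filter.Eventually.of_forall fun x => mul_self_nonneg _)
      ((hWc.mul hWc).continuousOn.integrableOn_compact hK.2.1)).1 h0
    filter_upwards [ae_restrict_of_ae_restrict_of_subset interior_subset h1] with x hx
    simpa using hx
  have heq := Measure.eqOn_open_of_ae_eq hae isOpen_interior hWc.continuousOn continuousOn_const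
  obtain ⟨x, hx⟩ := hK.2.2
  have hev : ∀ᶠ r : ℝ in nhds 0, x + r • WithLp.toLp 2 v ∈ interior K := by
    have : ContinuousAt (fun r : ℝ => x + r • WithLp.toLp 2 v) 0 := by fun_prop
    exact this.eventually_mem (by simpa using isOpen_interior.mem_nhds hx)
  obtain ⟨r, hr, hr0⟩ := ((hev.filter_mono nhdsWithin_le_nhds).and
    (self_mem_nhdsWithin : ∀ᶠ r : ℝ in nhdsWithin 0 (Set.Ioi 0), r ∈ Set.Ioi 0)).exists
  have e1 := heq hr
  have e2 := heq hx
  simp only [hW, PiLp.add_apply, PiLp.smul_apply, smul_eq_mul] at e1 e2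
  have e3 : r * ∑ i, v i * v i = 0 := by
    rw [Finset.mul_sum, ← sub_eq_zero.2 (e1.trans e2.symm), ← Finset.sum_sub_distrib]
    exact Finset.sum_congr rfl fun i _ => by ring
  have e4 : v ⬝ᵥ v = 0 := (mul_eq_zero.1 e3).resolve_left (ne_of_gt hr0)
  exact dotProduct_self_eq_zero.1 e4

/-- The variance over `K` of a linear functional bounded above on `K` by `M` is at most the square of the
distance from its mean to `M`. This is `second_moment` for `M - L`. -/
lemma variance_le {n : ℕ} {K : Set (Euc n)} (hK : IsConvexBody K) (L : Euc n →L[ℝ] ℝ) {M : ℝ}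
    (hM : ∀ x ∈ K, L x ≤ M) :
    L (centroid K) ≤ M ∧
      ∫ x in K, L (x - centroid K) ^ 2 ≤ volume.real K * (M - L (centroid K)) ^ 2 := by
  have hV := hK.volume_real_pos
  have hc : ∀ {φ : Euc n → ℝ}, Continuous φ → IntegrableOn φ K := fun h =>
    h.continuousOn.integrableOn_compact hK.2.1
  have hid : IntegrableOn (fun x : Euc n => x) K :=
    continuous_id.continuousOn.integrableOn_compact hK.2.1
  set b := centroid K with hb
  set V := volume.real K with hVdef
  have hL : ∫ x in K, L x = V * L b := by
    rw [L.integral_comp_comm hid, hK.integral_eq, map_smul, smul_eq_mul]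
  have hY : ∫ x in K, (M - L x) = V * (M - L b) := by
    rw [integral_sub (hc continuous_const) (hc L.continuous), hL, setIntegral_const, smul_eq_mul]
    ring
  have hY0 : ∀ x ∈ K, 0 ≤ M - L x := fun x hx => sub_nonneg.2 (hM x hx)
  have hpos : 0 ≤ V * (M - L b) := hY ▸ setIntegral_nonneg hK.2.1.measurableSet hY0
  have h2 := second_moment hK.1 hK.2.1 (Y := fun x => M - L x) (by fun_prop)
    (fun x y p q _ _ hpq => by
      simp only [map_add, map_smul, smul_eq_mul]
      linear_combination (-M) * hpq) hY0
  have e : ∫ x in K, (M - L x) ^ 2 = V * (M - L b) ^ 2 + ∫ x in K, L (x - b) ^ 2 := by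
    have : ∀ x, (M - L x) ^ 2 = ((M - L b) * (M + L b) - 2 * (M - L b) * L x) + L (x - b) ^ 2 := by
      intro x; rw [map_sub]; ring
    rw [integral_congr_ae (Filter.Eventually.of_forall this),
      integral_add (hc (by fun_prop)) (hc (by fun_prop)),
      integral_sub (hc (by fun_prop)) (hc (by fun_prop)), setIntegral_const, smul_eq_mul,
      integral_const_mul, hL]
    ring
  rw [hY, e, mul_pow] at h2
  refine ⟨sub_nonneg.1 (nonneg_of_mul_nonneg_right hpos hV), ?_⟩
  have : V * (V * (M - L b) ^ 2 + ∫ x in K, L (x - b) ^ 2) ≤ V * (2 * (V * (M - L b) ^ 2)) := by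
    linarith
  linarith [le_of_mul_le_mul_left this hV]

/-- The reflected inertial ellipsoid, centred at the centroid, is contained in `K`. If a functional `L`
separated `b - e` from `K`, then `(L e) ^ 2 ≤ Var L` by Cauchy–Schwarz for the covariance form,
while `Var L` is at most the square of the distance from `L b` to the supremum of `L` on `K`. -/
lemma centroid_sub_mem {n : ℕ} {K : Set (Euc n)} (hK : IsConvexBody K) {e : Euc n}
    (he : e ∈ inertialEllipsoid K) : centroid K - e ∈ K := by
  by_contra hq
  obtain ⟨L, r, hr, hrq⟩ := geometric_hahn_banach_closed_point hK.1 hK.2.1.isClosed hq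
  have hV := hK.volume_real_pos
  -- `M` lies strictly above `sup L`, so that `c = M - L b` is positive below
  obtain ⟨M, hrM, hMq⟩ := exists_between hrq
  obtain ⟨hb, -⟩ := variance_le hK L fun x hx => (hr x hx).le
  obtain ⟨-, hvar⟩ := variance_le hK L fun x hx => ((hr x hx).trans hrM).le
  set b := centroid K with hbdef
  set V := volume.real K with hVdef
  set c := M - L b with hc
  have hc0 : 0 < c := by linarith
  set u : Fin n → ℝ := fun i => L (EuclideanSpace.single i 1) with hu
  have hLu : ∀ y : Euc n, L y = ∑ i, u i * y i := by
    intro y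
    conv_lhs => rw [← (EuclideanSpace.basisFun (Fin n) ℝ).sum_repr y]
    simp [hu, mul_comm]
  set C := covMatrix K with hC
  set w : Fin n → ℝ := C⁻¹.mulVec (WithLp.ofLp e) with hw
  have hCw : C.mulVec w = WithLp.ofLp e := by
    rw [hw, Matrix.mulVec_mulVec, Matrix.mul_nonsing_inv _ (isUnit_det_covMatrix hK),
      Matrix.one_mulVec]
  set W : Euc n → ℝ := fun x => ∑ i, w i * (x i - b i) with hW
  have hLx : ∀ x : Euc n, L (x - b) = ∑ i, u i * (x i - b i) := fun x => by rw [hLu]; simp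
  have hww : ∫ x in K, W x * W x ≤ V := by
    have h1 := dotProduct_covMatrix_mulVec hK.2.1 w w
    rw [← hC, hCw] at h1
    have h2 : w ⬝ᵥ WithLp.ofLp e ≤ 1 := by
      rw [dotProduct_comm, hw]
      refine le_trans (le_of_eq ?_) he
      simp only [dotProduct, Matrix.mulVec, Finset.mul_sum, mul_assoc, hC]
    rw [h1, inv_mul_le_iff₀ hV, mul_one] at h2
    exact h2
  have hwu : ∫ x in K, L (x - b) * W x = V * L e := by
    have h1 := dotProduct_covMatrix_mulVec hK.2.1 u w
    rw [← hC, hCw] at h1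
    rw [hLu e]
    change ∑ i, u i * e i = _ at h1
    rw [h1, mul_inv_cancel_left₀ hV.ne']
    simp_rw [hLx]
    rfl
  have hi : ∀ {φ : Euc n → ℝ}, Continuous φ → IntegrableOn φ K := fun h =>
    h.continuousOn.integrableOn_compact hK.2.1
  have hWc : Continuous W := by fun_prop
  -- Cauchy–Schwarz in the form of one square: `W` is the functional `w = cov⁻¹ e`, of variance at
  -- most `1`, and its covariance with `L` is `L e`
  have hsq : 0 ≤ ∫ x in K, (c * W x + L (x - b)) ^ 2 :=
    integral_nonneg fun x => sq_nonneg _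
  have hexp : ∫ x in K, (c * W x + L (x - b)) ^ 2 =
      c ^ 2 * (∫ x in K, W x * W x) + 2 * c * (V * L e) + ∫ x in K, L (x - b) ^ 2 := by
    have : ∀ x, (c * W x + L (x - b)) ^ 2 =
        c ^ 2 * (W x * W x) + 2 * c * (L (x - b) * W x) + L (x - b) ^ 2 := fun x => by ring
    simp_rw [this]
    rw [integral_add (hi (by fun_prop)) (hi (by fun_prop)),
      integral_add (hi (by fun_prop)) (hi (by fun_prop)), integral_const_mul, integral_const_mul,
      hwu]
  have hfin : 0 ≤ (2 * c * V) * (c + L e) := by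
    have := mul_le_mul_of_nonneg_left hww (sq_nonneg c)
    nlinarith
  have := nonneg_of_mul_nonneg_right hfin (by positivity)
  rw [map_sub] at hMq
  linarith

/-! ### The volume of `K ∩ -K` -/

theorem volume_inter_neg_ge_of_centroid_near
    {n : ℕ} (K : Set (Euc n)) (hK : IsConvexBody K) (t : ℝ)
    (ht0 : 0 ≤ t) (ht1 : t < 1)
    (hcent : centroid K ∈ t • inertialEllipsoid K) :
    ENNReal.ofReal (((1 - t) / 2) ^ n) * volume K ≤ volume (K ∩ -K) := by
  -- in dimension `0` the exponent `1 / n` is meaningless and the claim trivial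
  rcases eq_or_ne n 0 with rfl | hn
  · have : K ∩ -K = K := by
      ext x
      simp [Subsingleton.elim (-x) x]
    simp [this]
  obtain ⟨e, he, hbe⟩ := hcent
  simp only at hbe
  have hp := centroid_sub_mem hK he
  set b := centroid K with hb
  set p := b - e with hpdef
  have h1t : 0 < 1 - t := by linarith
  have MP := milman_pajor hn hK.1 hK.2.1 hK.volume_real_pos hK.integral_eq
  rw [← hb] at MP
  set S := symmSection K ((2 : ℝ) • b) with hS
  -- the origin is the image of the centroid under `x ↦ (1 - t) x + t p`
  have hzero : (1 - t) • b + t • p = 0 := by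
    rw [hpdef, ← hbe]; module
  have hsub : (fun x => x + t • p) '' ((1 - t) • S) ⊆ K ∩ -K := by
    rintro _ ⟨_, ⟨x, ⟨hx, hx'⟩, rfl⟩, rfl⟩
    refine ⟨hK.1 hx hp h1t.le ht0 (by ring), ?_⟩
    rw [Set.mem_neg]
    convert hK.1 hx' hp h1t.le ht0 (by ring) using 1
    have : (1 - t) • ((2 : ℝ) • b - x) + t • p =
      (2 : ℝ) • ((1 - t) • b + t • p) - ((1 - t) • x + t • p) := by module
    rw [this, hzero, smul_zero, zero_sub]
  refine le_trans ?_ (measure_mono hsub)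
  rw [Set.image_add_right, measure_preimage_add_right, Measure.addHaar_smul_of_nonneg _ h1t.le,
    finrank_euclideanSpace_fin, div_pow, div_eq_mul_inv, ENNReal.ofReal_mul (by positivity),
    mul_assoc]
  gcongr
  have hSt : volume S ≠ ⊤ := (isCompact_symmSection hK.2.1 _).measure_ne_top
  rw [← ofReal_measureReal hK.2.1.measure_ne_top, ← ofReal_measureReal hSt,
    ← ENNReal.ofReal_mul (by positivity)]
  refine ENNReal.ofReal_le_ofReal ?_
  rwa [mul_comm, ← div_eq_mul_inv]

end
end
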